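/- Let f : ℝⁿ → ℝⁿ be continuously differentiable, let M be a symmetric positive definite real n×n matrix, β > 0, ℓ > 0. Let x̄ : [0,∞) → ℝⁿ be a differentiable nominal trajectory with x̄′(t) = f(x̄(t)), and suppose that for every t ≥ 0 and every v ∈ ℝⁿ with ‖v − x̄(t)‖_M ≤ ℓ one has (Df(v))ᵀ M + M (Df(v)) ≼ −2βM. If x : [0,∞) → ℝⁿ is differentiable with x′(t) = f(x(t)) and ‖x(0) − x̄(0)‖_M ≤ ℓ, then for all t ≥ 0 the trajectory remains in the ball, i.e. ‖x(t) − x̄(t)‖_M ≤ ℓ, and moreover converges exponentially: ‖x(t) − x̄(t)‖_M ≤ e^{−βt} ‖x(0) − x̄(0)‖_M. -/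

import Mathlib

open Matrix

/-- The M-norm of a vector: `‖v‖_M = √(vᵀ M v)`. -/
noncomputable def mnorm {n : ℕ} (M : Matrix (Fin n) (Fin n) ℝ) (v : Fin n → ℝ) : ℝ :=
  Real.sqrt (v ⬝ᵥ M.mulVec v)

/-- The Jacobian of `f` at `z`, as a matrix. -/
noncomputable def jac {n : ℕ} (f : (Fin n → ℝ) → (Fin n → ℝ)) (z : Fin n → ℝ) :
    Matrix (Fin n) (Fin n) ℝ :=
  LinearMap.toMatrix' (fderiv ℝ f z : (Fin n → ℝ) →ₗ[ℝ] (Fin n → ℝ))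

/-- Loewner order: `A ≼ B` iff `B - A` is positive semidefinite. -/
def loewnerLE {n : ℕ} (A B : Matrix (Fin n) (Fin n) ℝ) : Prop := (B - A).PosSemidef

/-!
Along the segment from `x̄ t` to `x t`, which lies in the contraction ball, the mean value theorem
turns the bound on `Df` into the one-sided Lipschitz estimate
`⟪x - x̄, f x - f x̄⟫_M ≤ -β ‖x - x̄‖_M²`. Hence `V = ‖x - x̄‖_M²` satisfies `V' ≤ -2β V` as long as
`V ≤ ℓ²`. In particular `V' < 0` wherever `V = ℓ²`, so `V` cannot cross that level; the differential
inequality therefore holds for all times, and Grönwall's inequality gives the exponential decay.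
-/

open Set

section ScalarBarrier

variable {V V' : ℝ → ℝ} {K r a b : ℝ}

lemma le_of_deriv_right_le_mul_of_le (hKr : K * r < 0) (hV : ContinuousOn V (Icc a b))
    (hV' : ∀ t ∈ Ico a b, HasDerivWithinAt V (V' t) (Ici t) t) (ha : V a ≤ r)
    (bound : ∀ t ∈ Ico a b, V t ≤ r → V' t ≤ K * V t) {t : ℝ} (ht : t ∈ Icc a b) : V t ≤ r := by
  refine image_le_of_deriv_right_lt_deriv_boundary (B := fun _ ↦ r) hV hV' ha
    (fun s ↦ hasDerivAt_const s r) (fun s hs hVs ↦ ?_) ht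
  calc V' s ≤ K * V s := bound s hs hVs.le
    _ = K * r := by rw [hVs]
    _ < 0 := hKr

lemma le_mul_exp_of_deriv_right_le_mul_of_le (hKr : K * r < 0) (hV : ContinuousOn V (Icc a b))
    (hV' : ∀ t ∈ Ico a b, HasDerivWithinAt V (V' t) (Ici t) t) (ha : V a ≤ r)
    (bound : ∀ t ∈ Ico a b, V t ≤ r → V' t ≤ K * V t) {t : ℝ} (ht : t ∈ Icc a b) :
    V t ≤ V a * Real.exp (K * (t - a)) := by
  have hVr : ∀ s ∈ Ico a b, V s ≤ r := fun s hs ↦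
    le_of_deriv_right_le_mul_of_le hKr hV hV' ha bound (Ico_subset_Icc_self hs)
  rw [← gronwallBound_ε0]
  refine le_gronwallBound_of_liminf_deriv_right_le hV
    (fun s hs _ hc ↦ (hV' s hs).liminf_right_slope_le hc) le_rfl (fun s hs ↦ ?_) t ht
  simpa only [add_zero] using bound s hs (hVr s hs)

end ScalarBarrier

section Form

variable {E : Type*} [NormedAddCommGroup E] [NormedSpace ℝ E]

/-- The seminorm `v ↦ √(B v v)` of a positive semidefinite continuous bilinear form `B`; it plays
the role of the `M`-norm on an arbitrary normed space. -/
noncomputable def formNorm (B : E →L[ℝ] E →L[ℝ] ℝ) (v : E) : ℝ := √(B v v)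

/-- The closed ball about `c` of radius `r` for the seminorm `formNorm B`. -/
def formClosedBall (B : E →L[ℝ] E →L[ℝ] ℝ) (c : E) (r : ℝ) : Set E := {v | formNorm B (v - c) ≤ r}

/-- The set `s` is a contraction region with rate `β` for the vector field `f` in the constant
metric `B`. Differentiability is part of the notion because `fderiv` is `0` where it fails. -/
def IsContractionRegion (B : E →L[ℝ] E →L[ℝ] ℝ) (f : E → E) (β : ℝ) (s : Set E) : Prop :=
  ∀ z ∈ s, DifferentiableAt ℝ f z ∧ ∀ w, B w (fderiv ℝ f z w) ≤ -β * B w w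

variable {B : E →L[ℝ] E →L[ℝ] ℝ}

lemma formNorm_nonneg (v : E) : 0 ≤ formNorm B v := Real.sqrt_nonneg _

lemma formNorm_smul (a : ℝ) (v : E) : formNorm B (a • v) = |a| * formNorm B v := by
  have hquad : B (a • v) (a • v) = a * a * B v v := by
    rw [ContinuousLinearMap.map_smul₂, map_smul, smul_eq_mul, smul_eq_mul, mul_assoc]
  rw [formNorm, hquad, Real.sqrt_mul (mul_self_nonneg a), Real.sqrt_mul_self_eq_abs, formNorm]

lemma formNorm_le_iff {v : E} {r : ℝ} (hr : 0 ≤ r) : formNorm B v ≤ r ↔ B v v ≤ r ^ 2 :=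
  Real.sqrt_le_left hr

lemma formNorm_sq (hB : B.toBilinForm.IsNonneg) (v : E) : formNorm B v ^ 2 = B v v :=
  Real.sq_sqrt (hB.nonneg v)

lemma starConvex_formClosedBall (c : E) (r : ℝ) : StarConvex ℝ c (formClosedBall B c r) := by
  rw [starConvex_iff_segment_subset]
  intro y hy z hz
  obtain ⟨θ, ⟨hθ₀, hθ₁⟩, rfl⟩ := (segment_eq_image' ℝ c y).subset hz
  calc formNorm B (c + θ • (y - c) - c) = θ * formNorm B (y - c) := by
        rw [add_sub_cancel_left, formNorm_smul, abs_of_nonneg hθ₀]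
    _ ≤ formNorm B (y - c) := mul_le_of_le_one_left (formNorm_nonneg _) hθ₁
    _ ≤ r := hy

lemma IsContractionRegion.apply_sub_le {f : E → E} {β : ℝ} {s : Set E}
    (hs : IsContractionRegion B f β s) {x y : E} (hxy : segment ℝ x y ⊆ s) :
    B (y - x) (f y - f x) ≤ -β * B (y - x) (y - x) := by
  have hderiv : ∀ z ∈ segment ℝ x y, HasFDerivWithinAt (fun z ↦ B (y - x) (f z))
      ((B (y - x)).comp (fderiv ℝ f z)) (segment ℝ x y) z := fun z hz ↦
    (B (y - x)).hasFDerivAt.comp_hasFDerivWithinAt z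
      (hs z (hxy hz)).1.hasFDerivAt.hasFDerivWithinAt
  obtain ⟨z, hz, hslope⟩ := domain_mvt hderiv (convex_segment x y)
    (left_mem_segment ℝ x y) (right_mem_segment ℝ x y)
  calc B (y - x) (f y - f x) = B (y - x) (fderiv ℝ f z (y - x)) := by rw [map_sub, hslope]; rfl
    _ ≤ -β * B (y - x) (y - x) := (hs z (hxy hz)).2 (y - x)

lemma hasDerivWithinAt_form_self (hB : B.toBilinForm.IsSymm) {e : ℝ → E} {e' : E} {s : Set ℝ}
    {t : ℝ} (he : HasDerivWithinAt e e' s t) :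
    HasDerivWithinAt (fun τ ↦ B (e τ) (e τ)) (2 * B (e t) e') s t := by
  have hsymm : B e' (e t) = B (e t) e' := hB.eq e' (e t)
  simpa only [hsymm, two_mul] using B.hasDerivWithinAt_of_bilinear he he

lemma formNorm_le_and_le_exp_mul (hB : B.toBilinForm.IsPosSemidef) {β ℓ : ℝ} (hβ : 0 < β)
    (hℓ : 0 < ℓ) {e e' : ℝ → E} (he : ∀ t ∈ Ici 0, HasDerivWithinAt e (e' t) (Ici 0) t)
    (hdissip : ∀ t ∈ Ici 0, formNorm B (e t) ≤ ℓ → B (e t) (e' t) ≤ -β * B (e t) (e t))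
    (he0 : formNorm B (e 0) ≤ ℓ) {t : ℝ} (ht : 0 ≤ t) :
    formNorm B (e t) ≤ ℓ ∧ formNorm B (e t) ≤ Real.exp (-β * t) * formNorm B (e 0) := by
  have hrate : -(2 * β) * ℓ ^ 2 < 0 := by
    have : 0 < β * ℓ ^ 2 := by positivity
    linarith
  have hV : ∀ s ∈ Ici (0 : ℝ),
      HasDerivWithinAt (fun τ ↦ B (e τ) (e τ)) (2 * B (e s) (e' s)) (Ici 0) s := fun s hs ↦
    hasDerivWithinAt_form_self hB.isSymm (he s hs)
  have hVcont : ContinuousOn (fun τ ↦ B (e τ) (e τ)) (Icc 0 t) := fun s hs ↦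
    (hV s hs.1).continuousWithinAt.mono Icc_subset_Ici_self
  have hVright : ∀ s ∈ Ico 0 t,
      HasDerivWithinAt (fun τ ↦ B (e τ) (e τ)) (2 * B (e s) (e' s)) (Ici s) s := fun s hs ↦
    (hV s hs.1).mono (Ici_subset_Ici.2 hs.1)
  have hbound : ∀ s ∈ Ico 0 t, B (e s) (e s) ≤ ℓ ^ 2 →
      2 * B (e s) (e' s) ≤ -(2 * β) * B (e s) (e s) := fun s hs hsℓ ↦ by
    linarith [hdissip s hs.1 ((formNorm_le_iff hℓ.le).2 hsℓ)]
  have hV0 : B (e 0) (e 0) ≤ ℓ ^ 2 := (formNorm_le_iff hℓ.le).1 he0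
  have htt : t ∈ Icc 0 t := right_mem_Icc.2 ht
  refine ⟨(formNorm_le_iff hℓ.le).2
    (le_of_deriv_right_le_mul_of_le hrate hVcont hVright hV0 hbound htt), ?_⟩
  rw [formNorm_le_iff (mul_nonneg (Real.exp_nonneg _) (formNorm_nonneg _))]
  calc B (e t) (e t) ≤ B (e 0) (e 0) * Real.exp (-(2 * β) * (t - 0)) :=
        le_mul_exp_of_deriv_right_le_mul_of_le hrate hVcont hVright hV0 hbound htt
    _ = (Real.exp (-β * t) * formNorm B (e 0)) ^ 2 := by
        rw [mul_pow, formNorm_sq hB.isNonneg, ← Real.exp_nat_mul, mul_comm]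
        congr 2
        push_cast
        ring

theorem stmt2_general (hB : B.toBilinForm.IsPosSemidef) {f : ℝ → E → E} {β ℓ : ℝ} (hβ : 0 < β)
    (hℓ : 0 < ℓ) {xbar x : ℝ → E} (hxbar : IsIntegralCurveOn xbar f (Ici 0))
    (hcontract : ∀ t, 0 ≤ t → IsContractionRegion B (f t) β (formClosedBall B (xbar t) ℓ))
    (hx : IsIntegralCurveOn x f (Ici 0)) (hx0 : formNorm B (x 0 - xbar 0) ≤ ℓ) {t : ℝ}
    (ht : 0 ≤ t) :
    formNorm B (x t - xbar t) ≤ ℓ ∧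
      formNorm B (x t - xbar t) ≤ Real.exp (-β * t) * formNorm B (x 0 - xbar 0) :=
  formNorm_le_and_le_exp_mul (e := fun t ↦ x t - xbar t) hB hβ hℓ
    (fun s hs ↦ (hx s hs).sub (hxbar s hs))
    (fun s hs hball ↦ (hcontract s hs).apply_sub_le
      ((starConvex_formClosedBall (xbar s) ℓ).segment_subset hball))
    hx0 ht

end Form

section MatrixForm

variable {ι : Type*} [Fintype ι] [DecidableEq ι] {n : ℕ}

/-- The continuous bilinear form `(v, w) ↦ vᵀ M w` of a matrix, through which a matrix metric is
viewed as a metric on a normed space. -/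
noncomputable def matrixForm (M : Matrix ι ι ℝ) : (ι → ℝ) →L[ℝ] (ι → ℝ) →L[ℝ] ℝ :=
  (Matrix.toLinearMap₂' ℝ M).toContinuousBilinearMap

lemma matrixForm_apply (M : Matrix ι ι ℝ) (v w : ι → ℝ) :
    matrixForm M v w = v ⬝ᵥ M *ᵥ w :=
  Matrix.toLinearMap₂'_apply' M v w

lemma isPosSemidef_matrixForm {M : Matrix ι ι ℝ} (hM : M.PosSemidef) :
    (matrixForm M).toBilinForm.IsPosSemidef where
  eq v w := by
    have hMT : Mᵀ = M := hM.isHermitian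
    simp only [ContinuousLinearMap.toBilinForm_apply, matrixForm_apply]
    calc v ⬝ᵥ M *ᵥ w = v ⬝ᵥ Mᵀ *ᵥ w := by rw [hMT]
      _ = w ⬝ᵥ M *ᵥ v := Matrix.dotProduct_transpose_mulVec M v w
  nonneg v := by
    simpa only [ContinuousLinearMap.toBilinForm_apply, matrixForm_apply, star_trivial]
      using hM.dotProduct_mulVec_nonneg v

lemma formNorm_matrixForm (M : Matrix (Fin n) (Fin n) ℝ) (v : Fin n → ℝ) :
    formNorm (matrixForm M) v = mnorm M v := by
  rw [formNorm, matrixForm_apply, mnorm]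

lemma jac_mulVec (f : (Fin n → ℝ) → Fin n → ℝ) (z w : Fin n → ℝ) :
    jac f z *ᵥ w = fderiv ℝ f z w :=
  LinearMap.toMatrix'_mulVec _ w

lemma matrixForm_mulVec_le_of_loewnerLE {M J : Matrix (Fin n) (Fin n) ℝ} {β : ℝ}
    (hM : M.IsSymm) (h : loewnerLE (Jᵀ * M + M * J) (-(2 * β) • M)) (w : Fin n → ℝ) :
    matrixForm M w (J *ᵥ w) ≤ -β * matrixForm M w w := by
  have htranspose : w ⬝ᵥ (Jᵀ * M) *ᵥ w = w ⬝ᵥ (M * J) *ᵥ w := by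
    rw [← Matrix.dotProduct_transpose_mulVec, Matrix.transpose_mul, Matrix.transpose_transpose,
      hM.eq]
  have hnonneg := h.dotProduct_mulVec_nonneg w
  simp only [star_trivial, Matrix.sub_mulVec, Matrix.add_mulVec, dotProduct_sub, dotProduct_add,
    htranspose, Matrix.smul_mulVec, dotProduct_smul, smul_eq_mul] at hnonneg
  rw [matrixForm_apply, matrixForm_apply, Matrix.mulVec_mulVec]
  linarith

lemma isContractionRegion_of_loewnerLE {M : Matrix (Fin n) (Fin n) ℝ} (hM : M.IsSymm)
    {f : (Fin n → ℝ) → Fin n → ℝ} {β : ℝ} {s : Set (Fin n → ℝ)}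
    (hf : ∀ z ∈ s, DifferentiableAt ℝ f z)
    (h : ∀ z ∈ s, loewnerLE ((jac f z)ᵀ * M + M * jac f z) (-(2 * β) • M)) :
    IsContractionRegion (matrixForm M) f β s := by
  refine fun z hz ↦ ⟨hf z hz, fun w ↦ ?_⟩
  rw [← jac_mulVec]
  exact matrixForm_mulVec_le_of_loewnerLE hM (h z hz) w

end MatrixForm

theorem stmt2 {n : ℕ} (f : (Fin n → ℝ) → (Fin n → ℝ)) (hf : ContDiff ℝ 1 f)
    (M : Matrix (Fin n) (Fin n) ℝ) (hMsymm : M.IsSymm) (hMpd : M.PosDef)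
    (β ℓ : ℝ) (hβ : 0 < β) (hℓ : 0 < ℓ)
    (xbar : ℝ → Fin n → ℝ)
    (hxbar : ∀ t : ℝ, 0 ≤ t → HasDerivAt xbar (f (xbar t)) t)
    (hcontract : ∀ t : ℝ, 0 ≤ t → ∀ v : Fin n → ℝ, mnorm M (v - xbar t) ≤ ℓ →
      loewnerLE ((jac f v)ᵀ * M + M * jac f v) ((-(2 * β)) • M))
    (x : ℝ → Fin n → ℝ)
    (hx : ∀ t : ℝ, 0 ≤ t → HasDerivAt x (f (x t)) t)
    (hx0 : mnorm M (x 0 - xbar 0) ≤ ℓ) :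
    ∀ t : ℝ, 0 ≤ t →
      mnorm M (x t - xbar t) ≤ ℓ ∧
      mnorm M (x t - xbar t) ≤ Real.exp (-β * t) * mnorm M (x 0 - xbar 0) := by
  intro t ht
  simp only [← formNorm_matrixForm] at hcontract hx0 ⊢
  exact stmt2_general (f := fun _ ↦ f) (isPosSemidef_matrixForm hMpd.posSemidef) hβ hℓ
    (fun s hs ↦ (hxbar s hs).hasDerivWithinAt)
    (fun s hs ↦ isContractionRegion_of_loewnerLE hMsymm
      (fun z _ ↦ hf.differentiable one_ne_zero z) (hcontract s hs))
    (fun s hs ↦ (hx s hs).hasDerivWithinAt) hx0 ht
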